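/- Let T be a tree on n vertices that is not a path, with ℓ leaves and h heavy edges, such that each heavy vertex of T has at least one light neighbor. Let S be the set of heavy vertices of T having exactly one light neighbor, s = |S|, and t the size of a maximum matching of the subgraph induced by S. Then λ(T^c) = n + ℓ − h + s − t − 3 and ρ(T^c) = ℓ − h + s − t − 2, where T^c denotes the complement of T. -/

import Mathlib

namespace PaperPC

open SimpleGraph

variable {V : Type*}

/-- The degree of a vertex, via the cardinality of its neighbor set. -/
noncomputable def ndeg (G : SimpleGraph V) (v : V) : ℕ := (G.neighborSet v).ncard

/-- A linear forest: an acyclic graph of maximum degree at most 2,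
i.e. a vertex-disjoint union of paths.  A spanning linear subforest of `G`
is exactly a path covering of `G` (isolated vertices are one-vertex paths). -/
def IsLinearForest (H : SimpleGraph V) : Prop :=
  H.IsAcyclic ∧ ∀ v, ndeg H v ≤ 2

/-- The number of paths of a path covering = number of connected components. -/
noncomputable def numPaths (H : SimpleGraph V) : ℕ := Nat.card H.ConnectedComponent

/-- The path covering number `P(G)`. -/
noncomputable def pathCoverNumber (G : SimpleGraph V) : ℕ :=
  sInf {k | ∃ H ≤ G, IsLinearForest H ∧ numPaths H = k}

/-- `H` is a minimum path covering of `G`. -/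
def IsMinPathCover (G H : SimpleGraph V) : Prop :=
  H ≤ G ∧ IsLinearForest H ∧ numPaths H = pathCoverNumber G

open scoped Classical in
/-- The path sequence of a path covering: the multiset of the numbers of vertices
of its paths (a multiset encodes the nondecreasing ordered sequence). -/
noncomputable def pathSeq [Fintype V] (H : SimpleGraph V) : Multiset ℕ :=
  (Finset.univ : Finset H.ConnectedComponent).val.map fun c => c.supp.ncard

/-- `G` admits a unique path sequence. -/
def UniquePathSequence [Fintype V] (G : SimpleGraph V) : Prop :=
  ∀ H₁ H₂ : SimpleGraph V, IsMinPathCover G H₁ → IsMinPathCover G H₂ →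
    pathSeq H₁ = pathSeq H₂

/-- Number of leaves (vertices of degree 1). -/
noncomputable def numLeaves (G : SimpleGraph V) : ℕ := {v | ndeg G v = 1}.ncard

/-- Number of heavy edges (edges both of whose endpoints have degree > 2). -/
noncomputable def numHeavyEdges (G : SimpleGraph V) : ℕ :=
  {e ∈ G.edgeSet | ∀ v ∈ e, 2 < ndeg G v}.ncard

/-- Number of edges. -/
noncomputable def numEdges (G : SimpleGraph V) : ℕ := G.edgeSet.ncard

/-- A graph is 2-sparse if no two adjacent vertices both have degree > 2. -/
def TwoSparse (G : SimpleGraph V) : Prop :=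
  ∀ u v, G.Adj u v → ndeg G u ≤ 2 ∨ ndeg G v ≤ 2

/-- `G` is a path graph. -/
def IsPathGraph (G : SimpleGraph V) : Prop := G.IsTree ∧ ∀ v, ndeg G v ≤ 2

/-- `G` is a cycle graph. -/
def IsCycleGraph (G : SimpleGraph V) : Prop := G.Connected ∧ ∀ v, ndeg G v = 2

/-- A generalized star: a tree with exactly one heavy vertex (the center) in which
all vines have the same number of vertices (equivalently, all leaves are at the same
distance from the center). -/
def IsGenStar (G : SimpleGraph V) : Prop :=
  G.IsTree ∧ ∃ c k, 2 < ndeg G c ∧ (∀ v, v ≠ c → ndeg G v ≤ 2) ∧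
    ∀ v, ndeg G v = 1 → G.dist c v = k

/-- An L(2,1)-labeling. -/
def IsL21Labeling (G : SimpleGraph V) (f : V → ℕ) : Prop :=
  (∀ u v, G.Adj u v → 2 ≤ Nat.dist (f u) (f v)) ∧
  (∀ u v, G.dist u v = 2 → 1 ≤ Nat.dist (f u) (f v))

/-- `λ(G)`: the least `k` such that `G` has an L(2,1)-labeling with labels in `{0,…,k}`. -/
noncomputable def lambdaNum (G : SimpleGraph V) : ℕ :=
  sInf {k | ∃ f : V → ℕ, IsL21Labeling G f ∧ ∀ v, f v ≤ k}

/-- A λ-labeling: an L(2,1)-labeling with maximum label `λ(G)`. -/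
def IsLambdaLabeling (G : SimpleGraph V) (f : V → ℕ) : Prop :=
  IsL21Labeling G f ∧ (∀ v, f v ≤ lambdaNum G) ∧ ∃ v, f v = lambdaNum G

/-- The set of holes of a labeling: unused labels `h` with `1 ≤ h ≤ λ(G) - 1`. -/
def labHoles (G : SimpleGraph V) (f : V → ℕ) : Set ℕ :=
  {h | 1 ≤ h ∧ h + 1 ≤ lambdaNum G ∧ ∀ v, f v ≠ h}

/-- The hole index `ρ(G)`: minimum number of holes over all λ-labelings. -/
noncomputable def holeIndex (G : SimpleGraph V) : ℕ :=
  sInf {k | ∃ f : V → ℕ, IsLambdaLabeling G f ∧ (labHoles G f).ncard = k}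

open scoped Classical in
/-- The island sequence of a labeling: the multiset of cardinalities of the maximal
intervals `[a,b]` of consecutive integers all used by the labeling. -/
noncomputable def islandSeq [Fintype V] (G : SimpleGraph V) (f : V → ℕ) : Multiset ℕ :=
  (((Finset.range (lambdaNum G + 1)) ×ˢ (Finset.range (lambdaNum G + 1))).filter
    (fun q => q.1 ≤ q.2 ∧ (∀ x ∈ Finset.Icc q.1 q.2, ∃ v, f v = x) ∧
      (q.1 = 0 ∨ ∀ v, f v ≠ q.1 - 1) ∧ ∀ v, f v ≠ q.2 + 1)).val.map
    fun q => q.2 - q.1 + 1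

/-- `G` admits (at least) two distinct island sequences. -/
def MultipleIslandSequences [Fintype V] (G : SimpleGraph V) : Prop :=
  ∃ f g : V → ℕ, IsLambdaLabeling G f ∧ IsLambdaLabeling G g ∧
    (labHoles G f).ncard = holeIndex G ∧ (labHoles G g).ncard = holeIndex G ∧
    islandSeq G f ≠ islandSeq G g

/-- A vine: a maximal path one of whose endpoints (`a`) is a leaf and all of whose
vertices are light.  Maximality: any light vertex adjacent to the other end already
lies on the path. -/
def IsVine (G : SimpleGraph V) {a b : V} (p : G.Walk a b) : Prop :=
  p.IsPath ∧ ndeg G a = 1 ∧ (∀ v ∈ p.support, ndeg G v ≤ 2) ∧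
  ∀ c, G.Adj b c → ndeg G c ≤ 2 → c ∈ p.support

/-- A vine with center `v`: the (heavy) vertex adjacent to the non-leaf end of the vine. -/
def IsVineWithCenter (G : SimpleGraph V) {a b : V} (p : G.Walk a b) (v : V) : Prop :=
  IsVine G p ∧ G.Adj b v ∧ 2 < ndeg G v

/-- The matching number of the subgraph of `G` induced by `S`. -/
noncomputable def matchingNumberOn (G : SimpleGraph V) (S : Set V) : ℕ :=
  sSup {k | ∃ M : Set (Sym2 V), M ⊆ G.edgeSet ∧ (∀ e ∈ M, ∀ v ∈ e, v ∈ S) ∧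
    (∀ e ∈ M, ∀ f ∈ M, e ≠ f → ∀ v, v ∈ e → v ∉ f) ∧ M.ncard = k}

/-- Labels used in the family `F`: `A`, or `B k` where `k` records the number of
vertices of each vine of the labeled generalized star that produced the label. -/
inductive Lab | A | B (k : ℕ)

/-- A labeled generalized star with center `c` whose vines have `k` vertices each
(equivalently, every leaf is at distance `k` from `c`); the degenerate case
`deg c = 2` is the convention regarding a path of length `2k` as a labeled
generalized star with two vines.  The neighbors of the center are labeled `B k`,
the other non-leaf vertices (and the center) are labeled `A`, leaves are unlabeled. -/
def IsLGenStar {W : Type*} (H : SimpleGraph W) (c : W) (k : ℕ)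
    (lab : W → Option Lab) : Prop :=
  H.IsTree ∧ 2 ≤ ndeg H c ∧ (∀ v, v ≠ c → ndeg H v ≤ 2) ∧
  (∀ v, ndeg H v = 1 → H.dist c v = k) ∧
  lab c = some Lab.A ∧
  (∀ v, H.Adj c v → lab v = some (Lab.B k)) ∧
  (∀ v, v ≠ c → ¬H.Adj c v → ndeg H v = 1 → lab v = none) ∧
  (∀ v, v ≠ c → ¬H.Adj c v → 2 ≤ ndeg H v → lab v = some Lab.A)

/-- A labeled path: a path with at least three vertices, non-leaf vertices labeled `A`. -/
def IsLPath {W : Type*} (H : SimpleGraph W) (lab : W → Option Lab) : Prop :=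
  H.IsTree ∧ (∀ v, ndeg H v ≤ 2) ∧ 3 ≤ Nat.card W ∧
  (∀ v, ndeg H v = 1 → lab v = none) ∧
  ∀ v, 2 ≤ ndeg H v → lab v = some Lab.A

/-- The induced subgraph of `T` on `s` is a labeled generalized star. -/
def LGenStarOn (T : SimpleGraph V) (s : Set V) (c : V) (k : ℕ)
    (lab : V → Option Lab) : Prop :=
  ∃ hc : c ∈ s, IsLGenStar (T.induce s) ⟨c, hc⟩ k fun v => lab v.1

/-- The induced subgraph of `T` on `s` is a labeled path. -/
def LPathOn (T : SimpleGraph V) (s : Set V) (lab : V → Option Lab) : Prop :=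
  IsLPath (T.induce s) fun v => lab v.1

/-- The family `F` of labeled trees, realized as induced subgraphs (on vertex sets `s`)
of an ambient graph `T`:  start from a labeled generalized star with at least three
vines or from a labeled path, and repeatedly attach, via a single new edge, a labeled
generalized star with at least three vines at a vertex labeled `A` (Type-1), a labeled
path by one of its non-leaf vertices at a vertex labeled `A` (Type-2), or a labeled
generalized star whose vines have the same number of vertices `k` as those of the star
that labeled `u` with `B k`, at a vertex `u` labeled `B k` (Type-3). -/
inductive InF (T : SimpleGraph V) : Set V → (V → Option Lab) → Prop
  | base_star (s : Set V) (c : V) (k : ℕ) (lab : V → Option Lab) :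
      LGenStarOn T s c k lab → 3 ≤ {w ∈ s | T.Adj c w}.ncard → InF T s lab
  | base_path (s : Set V) (lab : V → Option Lab) :
      LPathOn T s lab → InF T s lab
  | type1 (s : Set V) (lab : V → Option Lab) (t : Set V) (lab' : V → Option Lab)
      (u c : V) (k : ℕ) :
      InF T s lab → Disjoint s t → u ∈ s → c ∈ t → lab u = some Lab.A →
      LGenStarOn T t c k lab' → 3 ≤ {w ∈ t | T.Adj c w}.ncard →
      (∀ x ∈ s, ∀ y ∈ t, (T.Adj x y ↔ x = u ∧ y = c)) →
      (∀ x ∈ s, lab' x = lab x) →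
      InF T (s ∪ t) lab'
  | type2 (s : Set V) (lab : V → Option Lab) (t : Set V) (lab' : V → Option Lab)
      (u v : V) :
      InF T s lab → Disjoint s t → u ∈ s → v ∈ t → lab u = some Lab.A →
      LPathOn T t lab' → 2 ≤ {w ∈ t | T.Adj v w}.ncard →
      (∀ x ∈ s, ∀ y ∈ t, (T.Adj x y ↔ x = u ∧ y = v)) →
      (∀ x ∈ s, lab' x = lab x) →
      InF T (s ∪ t) lab'
  | type3 (s : Set V) (lab : V → Option Lab) (t : Set V) (lab' : V → Option Lab)
      (u c : V) (k : ℕ) :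
      InF T s lab → Disjoint s t → u ∈ s → c ∈ t → lab u = some (Lab.B k) →
      LGenStarOn T t c k lab' →
      (∀ x ∈ s, ∀ y ∈ t, (T.Adj x y ↔ x = u ∧ y = c)) →
      (∀ x ∈ s, lab' x = lab x) →
      InF T (s ∪ t) lab'

/-- `G` is obtained from the tree `T` by expanding each edge of `T` into a complete
graph of arbitrary order: there is an embedding `ι` of the vertices of `T` and an
assignment `b` of a block of vertices of `G` to each edge of `T` such that an original
vertex lies in the block of an edge iff it is an endpoint of that edge, blocks of
distinct edges meet only in original vertices, every vertex of `G` lies in some block,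
and two distinct vertices of `G` are adjacent iff they lie in a common block. -/
def IsBlockExpansion {U W : Type*} (T : SimpleGraph U) (G : SimpleGraph W) : Prop :=
  ∃ (ι : U ↪ W) (b : Sym2 U → Set W),
    (∀ (u : U), ∀ e ∈ T.edgeSet, (ι u ∈ b e ↔ u ∈ e)) ∧
    (∀ e ∈ T.edgeSet, ∀ f ∈ T.edgeSet, e ≠ f → b e ∩ b f ⊆ Set.range ι) ∧
    (∀ w : W, ∃ e ∈ T.edgeSet, w ∈ b e) ∧
    (∀ x y : W, G.Adj x y ↔ x ≠ y ∧ ∃ e ∈ T.edgeSet, x ∈ b e ∧ y ∈ b e)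

/-!
In the complement of `G`, two vertices may carry consecutive labels only if they are adjacent in
`G`. Hence the runs of consecutive labels of an injective labeling of `Gᶜ` are the paths of a path
covering of `G`, with one label skipped between successive paths, and conversely every path
covering arises in this way. If `G` has girth greater than 4, a repeated label forces all vertices
but one to carry labels pairwise at distance at least 2, which is never cheaper as long as
`P(G) ≤ n - 2`. Therefore `λ(Gᶜ) = n + P(G) - 2` and `ρ(Gᶜ) = P(G) - 1`.

In a forest `T`, a path covering with `m` edges consists of `n - m` paths, so `P(T)` is found by
maximizing the number of edges of a subgraph of maximum degree at most 2. The edges between light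
vertices can all be kept. Writing `R` for the set of kept edges between heavy vertices, the number
of kept edges with a heavy endpoint is the sum of the degrees of the heavy vertices minus `|R|`,
where a vertex of `S` has degree at most 1 unless an edge of `R` covers it. Since `R` covers at
most `|R| + t` vertices of `S`, that number is at most twice the number of heavy vertices, minus
`s`, plus `t`. Equality is attained when `R` is a maximum matching of `S` and every heavy vertex is
completed with edges to light neighbors.
-/

section Forests

variable {G H : SimpleGraph V}

theorem ndeg_eq_degree (G : SimpleGraph V) (v : V) [Fintype (G.neighborSet v)] :
    ndeg G v = G.degree v := by
  rw [ndeg, Set.ncard_eq_toFinset_card', ← G.neighborFinset_def, card_neighborFinset_eq_degree]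

theorem ndeg_pos [Finite V] {u v : V} (h : G.Adj u v) : 0 < ndeg G u :=
  (Set.ncard_pos).2 ⟨v, h⟩

open scoped Classical in
theorem sum_ndeg [Fintype V] (G : SimpleGraph V) : ∑ v, ndeg G v = 2 * G.edgeSet.ncard := by
  simp only [ndeg_eq_degree, sum_degrees_eq_twice_card_edges, Set.ncard_eq_toFinset_card',
    edgeFinset]

theorem ndeg_toSimpleGraph (c : H.ConnectedComponent) (v : c) :
    ndeg c.toSimpleGraph v = ndeg H v := by
  rw [ndeg, ndeg, ← Set.ncard_image_of_injective _ Subtype.val_injective]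
  congr 1
  ext w
  refine ⟨?_, fun hw => ⟨⟨w, c.mem_supp_of_adj_mem_supp v.2 hw⟩, hw, rfl⟩⟩
  rintro ⟨w, hw, rfl⟩
  exact hw

open scoped Classical in
theorem sum_ndeg_add_two_of_isAcyclic [Fintype V] (hH : H.IsAcyclic) (c : H.ConnectedComponent) :
    ∑ v : c, ndeg H v + 2 = 2 * Fintype.card c := by
  rw [← (hH.isTree_connectedComponent c).card_edgeFinset, mul_add_one, edgeFinset,
    ← Set.ncard_eq_toFinset_card', ← sum_ndeg]
  simp only [ndeg_toSimpleGraph]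

theorem numPaths_add_ncard_edgeSet [Finite V] (hH : H.IsAcyclic) :
    numPaths H + H.edgeSet.ncard = Nat.card V := by
  have := Fintype.ofFinite V
  classical
  have hV : ∑ c : H.ConnectedComponent, Fintype.card c = Nat.card V := by
    rw [← Fintype.card_sigma, Nat.card_eq_fintype_card]
    exact Fintype.card_congr (Equiv.sigmaFiberEquiv H.connectedComponentMk)
  have hdeg : ∑ c : H.ConnectedComponent, ∑ v : c, ndeg H v = 2 * H.edgeSet.ncard := by
    rw [← sum_ndeg, ← Fintype.sum_sigma']
    exact (Equiv.sigmaFiberEquiv H.connectedComponentMk).sum_comp (ndeg H)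
  have hsum := Fintype.sum_congr _ _ (sum_ndeg_add_two_of_isAcyclic hH)
  rw [Finset.sum_add_distrib, hdeg, ← Finset.mul_sum, hV, Finset.sum_const, Finset.card_univ,
    ← Nat.card_eq_fintype_card, smul_eq_mul] at hsum
  rw [numPaths]
  omega

theorem pathCoverNumber_le (hHG : H ≤ G) (hH : IsLinearForest H) :
    pathCoverNumber G ≤ numPaths H :=
  Nat.sInf_le ⟨H, hHG, hH, rfl⟩

theorem isLinearForest_bot : IsLinearForest (⊥ : SimpleGraph V) :=
  ⟨isAcyclic_bot, fun v => by simp [ndeg]⟩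

theorem exists_isMinPathCover (G : SimpleGraph V) : ∃ H, IsMinPathCover G H :=
  Nat.sInf_mem (s := {k | ∃ H ≤ G, IsLinearForest H ∧ numPaths H = k})
    ⟨_, ⊥, bot_le, isLinearForest_bot, rfl⟩

end Forests

section Traversals

variable {H : SimpleGraph V} {d : V → ℕ}

/-- `d` lists the vertices of `H` along a traversal of its paths: distinct vertices have distinct
positions, and adjacent vertices have consecutive positions. -/
structure IsTraversal (H : SimpleGraph V) (d : V → ℕ) : Prop where
  injective : Function.Injective d
  le_comap_hasse : H ≤ (hasse ℕ).comap d

/-- The vertices at which a path of `H` ends when it is run through in the direction of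
increasing `d`. -/
def lastVertices (H : SimpleGraph V) (d : V → ℕ) : Set V :=
  {v | ∀ w, H.Adj v w → d w ≠ d v + 1}

theorem comap_hasse_adj {u v : V} :
    ((hasse ℕ).comap d).Adj u v ↔ d u + 1 = d v ∨ d v + 1 = d u := by
  simp only [comap_adj, hasse_adj, Order.covBy_iff_add_one_eq]

namespace IsTraversal

theorem adj (hd : IsTraversal H d) {u v : V} (h : H.Adj u v) : d u + 1 = d v ∨ d v + 1 = d u :=
  comap_hasse_adj.1 (hd.le_comap_hasse h)

theorem mono {K : SimpleGraph V} (hd : IsTraversal H d) (hK : K ≤ H) : IsTraversal K d :=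
  ⟨hd.injective, hK.trans hd.le_comap_hasse⟩

theorem not_reachable_of_lt (hd : IsTraversal H d) {u v : V} (hu : u ∈ lastVertices H d)
    (huv : d u < d v) : ¬ H.Reachable u v := by
  rintro ⟨p⟩
  obtain ⟨e, -, hfst, hsnd⟩ := p.exists_boundary_dart {w | d w ≤ d u} (le_refl (d u)) huv.not_ge
  simp only [Set.mem_ofPred_eq, not_le] at hfst hsnd
  have hadj := hd.adj e.adj
  have heq : e.fst = u := hd.injective (by omega)
  exact hu e.snd (heq ▸ e.adj) (by rw [heq] at hadj; omega)

theorem isBridge (hd : IsTraversal H d) {u v : V} (huv : d u + 1 = d v) :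
    H.IsBridge s(u, v) := by
  have hd' : IsTraversal (H.deleteEdges {s(u, v)}) d := hd.mono (deleteEdges_le _)
  refine isBridge_iff.2 (hd'.not_reachable_of_lt (fun w hw hdw => ?_) (by omega))
  obtain rfl : w = v := hd.injective (hdw.trans huv)
  simp only [deleteEdges_adj, Set.mem_singleton_iff, not_true, and_false] at hw

theorem isAcyclic (hd : IsTraversal H d) : H.IsAcyclic := by
  rw [isAcyclic_iff_forall_adj_isBridge]
  intro u v huv
  obtain h | h := hd.adj huv
  · exact hd.isBridge h
  · exact Sym2.eq_swap ▸ hd.isBridge h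

theorem ndeg_le_two (hd : IsTraversal H d) (v : V) : ndeg H v ≤ 2 := by
  have hsub : d '' H.neighborSet v ⊆ {d v - 1, d v + 1} := by
    rintro _ ⟨w, hw, rfl⟩
    have := hd.adj hw
    simp only [Set.mem_insert_iff, Set.mem_singleton_iff]
    omega
  calc ndeg H v = (d '' H.neighborSet v).ncard :=
        (Set.ncard_image_of_injective _ hd.injective).symm
    _ ≤ ({d v - 1, d v + 1} : Set ℕ).ncard := Set.ncard_le_ncard hsub
    _ ≤ 2 := (Set.ncard_insert_le _ _).trans (by rw [Set.ncard_singleton])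

theorem isLinearForest (hd : IsTraversal H d) : IsLinearForest H :=
  ⟨hd.isAcyclic, hd.ndeg_le_two⟩

theorem exists_mem_lastVertices [Finite V] (d : V → ℕ) (c : H.ConnectedComponent) :
    ∃ v ∈ lastVertices H d, H.connectedComponentMk v = c := by
  obtain ⟨v, hv, hmax⟩ := Set.exists_max_image c.supp d (Set.toFinite _) c.nonempty_supp
  refine ⟨v, fun w hw hdw => ?_, hv⟩
  have := hmax w (c.mem_supp_of_adj_mem_supp hv hw)
  omega

theorem numPaths_eq [Finite V] (hd : IsTraversal H d) : numPaths H = (lastVertices H d).ncard := by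
  refine (Nat.card_congr (Equiv.ofBijective
    (fun v : lastVertices H d => H.connectedComponentMk v) ⟨fun u v huv => ?_, fun c => ?_⟩)).symm
  · have huv := ConnectedComponent.exact huv
    rcases lt_trichotomy (d u) (d v) with hlt | heq | hgt
    · exact (hd.not_reachable_of_lt u.2 hlt huv).elim
    · exact Subtype.ext (hd.injective heq)
    · exact (hd.not_reachable_of_lt v.2 hgt huv.symm).elim
  · obtain ⟨v, hv, hc⟩ := exists_mem_lastVertices d c
    exact ⟨⟨v, hv⟩, hc⟩

end IsTraversal

end Traversals

section ExistsTraversal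

variable {H : SimpleGraph V}

theorem exists_reachable_ndeg_le_one [Finite V] (hH : H.IsAcyclic) (v : V) :
    ∃ u, H.Reachable v u ∧ ndeg H u ≤ 1 := by
  have := Fintype.ofFinite V
  classical
  by_contra! h
  let c := H.connectedComponentMk v
  have hsum := sum_ndeg_add_two_of_isAcyclic hH c
  have hle : ∑ _u : c, 2 ≤ ∑ u : c, ndeg H u :=
    Finset.sum_le_sum fun u _ => h u (ConnectedComponent.exact u.2.symm)
  rw [Finset.sum_const, Finset.card_univ, smul_eq_mul] at hle
  omega

theorem ndeg_sup_edge_self_le [Finite V] (u v : V) : ndeg (H ⊔ edge u v) u ≤ ndeg H u + 1 := by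
  refine (Set.ncard_le_ncard (t := insert v (H.neighborSet u)) fun w hw => ?_).trans
    (Set.ncard_insert_le _ _)
  simp only [mem_neighborSet, sup_adj, edge_adj] at hw
  simp only [Set.mem_insert_iff, mem_neighborSet]
  grind

theorem ndeg_sup_edge_of_ne {u v x : V} (hu : x ≠ u) (hv : x ≠ v) :
    ndeg (H ⊔ edge u v) x = ndeg H x := by
  simp [ndeg, neighborSet, edge_adj, hu, hv]

theorem IsLinearForest.sup_edge [Finite V] (hH : IsLinearForest H) {u v : V} (hu : ndeg H u ≤ 1)
    (hv : ndeg H v ≤ 1) (huv : ¬ H.Reachable u v) : IsLinearForest (H ⊔ edge u v) := by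
  refine ⟨hH.1.sup_edge_of_not_reachable huv, fun x => ?_⟩
  by_cases hxu : x = u
  · subst hxu
    exact (ndeg_sup_edge_self_le x v).trans (by omega)
  by_cases hxv : x = v
  · subst hxv
    exact edge_comm u x ▸ (ndeg_sup_edge_self_le x u).trans (by omega)
  · exact (ndeg_sup_edge_of_ne hxu hxv).trans_le (hH.2 x)

theorem IsLinearForest.exists_connected_ge [Finite V] [Nonempty V] (hH : IsLinearForest H) :
    ∃ K, H ≤ K ∧ IsLinearForest K ∧ K.Connected := by
  obtain ⟨K, hHK, hK⟩ := Set.Finite.exists_le_maximal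
    (Set.toFinite {K : SimpleGraph V | IsLinearForest K}) hH
  refine ⟨K, hHK, hK.prop, ⟨fun x y => by_contra fun hxy => ?_⟩⟩
  obtain ⟨u, hxu, hu⟩ := exists_reachable_ndeg_le_one hK.prop.1 x
  obtain ⟨v, hyv, hv⟩ := exists_reachable_ndeg_le_one hK.prop.1 y
  have huv : ¬ K.Reachable u v := fun h => hxy (hxu.trans (h.trans hyv.symm))
  have hle := hK.le_of_ge (hK.prop.sup_edge hu hv huv) le_sup_left
  refine huv (Adj.reachable (hle ?_))
  exact Or.inr ((edge_adj u v u v).2 ⟨.inl ⟨rfl, rfl⟩, fun h => huv (h ▸ .refl u)⟩)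

theorem exists_adj_dist_add_one_eq (hH : H.Connected) {x v : V} (hv : v ≠ x) :
    ∃ w, H.Adj w v ∧ H.dist x w + 1 = H.dist x v := by
  obtain ⟨p, hp⟩ := hH.exists_walk_length_eq_dist v x
  cases p with
  | nil => exact (hv rfl).elim
  | @cons _ w _ hvw q =>
    have hle := dist_le q.reverse
    have hdiff := hvw.diff_dist_adj (u := x)
    rw [Walk.length_reverse] at hle
    rw [Walk.length_cons, dist_comm] at hp
    exact ⟨w, hvw.symm, by omega⟩

theorem dist_injective_of_ndeg_le_two [Finite V] (hH : H.Connected) (hdeg : ∀ v, ndeg H v ≤ 2)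
    {x : V} (hx : ndeg H x ≤ 1) : Function.Injective (H.dist x) := by
  suffices h : ∀ k u v, H.dist x u = k → H.dist x v = k → u = v from
    fun u v huv => h _ u v rfl huv.symm
  intro k
  induction k with
  | zero =>
    intro u v hu hv
    rw [hH.dist_eq_zero_iff] at hu hv
    exact hu.symm.trans hv
  | succ k ih =>
    intro u v hu hv
    have hne {w : V} (hw : H.dist x w = k + 1) : w ≠ x := by
      rintro rfl
      simp at hw
    obtain ⟨a, hau, ha⟩ := exists_adj_dist_add_one_eq hH (hne hu)
    obtain ⟨b, hbv, hb⟩ := exists_adj_dist_add_one_eq hH (hne hv)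
    obtain rfl : a = b := ih a b (by omega) (by omega)
    by_contra huv
    rcases eq_or_ne a x with rfl | hax
    · exact hx.not_gt ((Set.one_lt_ncard_iff).2 ⟨u, v, hau, hbv, huv⟩)
    · obtain ⟨c, hca, hc⟩ := exists_adj_dist_add_one_eq hH hax
      have huc : u ≠ c := by
        rintro rfl
        omega
      have hvc : v ≠ c := by
        rintro rfl
        omega
      exact (hdeg a).not_gt ((Set.two_lt_ncard_iff).2 ⟨u, v, c, hau, hbv, hca.symm, huv, huc, hvc⟩)

theorem IsLinearForest.exists_isTraversal [Finite V] (hH : IsLinearForest H) :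
    ∃ d, IsTraversal H d ∧ ∀ v, d v < Nat.card V := by
  cases isEmpty_or_nonempty V
  · exact ⟨0, ⟨Function.injective_of_subsingleton _, fun u => isEmptyElim u⟩, isEmptyElim⟩
  obtain ⟨K, hHK, hK, hconn⟩ := hH.exists_connected_ge
  obtain ⟨x, -, hx⟩ := exists_reachable_ndeg_le_one hK.1 (Classical.arbitrary V)
  have hinj := dist_injective_of_ndeg_le_two hconn hK.2 hx
  refine ⟨K.dist x, ⟨hinj, fun u v huv => ?_⟩, fun v => ?_⟩
  · have := hinj.ne huv.ne
    have := (hHK huv).diff_dist_adj (u := x)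
    rw [comap_hasse_adj]
    omega
  · obtain ⟨p, hp, hlen⟩ := hconn.exists_path_of_dist x v
    have := Fintype.ofFinite V
    rw [← hlen, Nat.card_eq_fintype_card]
    exact hp.length_lt

end ExistsTraversal

section SpreadLabel

variable {H : SimpleGraph V} {d : V → ℕ} {u v : V}

/-- The labeling obtained from the positions `d` by skipping one label after each path of `H`. -/
noncomputable def spreadLabel (H : SimpleGraph V) (d : V → ℕ) (v : V) : ℕ :=
  d v + {w ∈ lastVertices H d | d w < d v}.ncard

theorem spreadLabel_lt [Finite V] (huv : d u < d v) : spreadLabel H d u < spreadLabel H d v :=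
  Nat.add_lt_add_of_lt_of_le huv
    (Set.ncard_le_ncard fun _ hw => ⟨hw.1, hw.2.trans huv⟩)

theorem spreadLabel_injective [Finite V] (hd : Function.Injective d) :
    Function.Injective (spreadLabel H d) := by
  intro u v huv
  by_contra hne
  rcases (hd.ne hne).lt_or_gt with h | h
  · exact (spreadLabel_lt h).ne huv
  · exact (spreadLabel_lt h).ne' huv

theorem spreadLabel_add_two_le_of_mem_lastVertices [Finite V] (hu : u ∈ lastVertices H d)
    (huv : d u < d v) : spreadLabel H d u + 2 ≤ spreadLabel H d v := by
  have hlt : {w ∈ lastVertices H d | d w < d u}.ncard <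
      {w ∈ lastVertices H d | d w < d v}.ncard :=
    Set.ncard_lt_ncard ⟨fun _ hw => ⟨hw.1, hw.2.trans huv⟩, fun h => lt_irrefl _ (h ⟨hu, huv⟩).2⟩
  rw [spreadLabel, spreadLabel]
  omega

theorem spreadLabel_add_two_le [Finite V] (hd : Function.Injective d) (huv : d u < d v)
    (hadj : ¬ H.Adj u v) : spreadLabel H d u + 2 ≤ spreadLabel H d v := by
  by_cases hu : u ∈ lastVertices H d
  · exact spreadLabel_add_two_le_of_mem_lastVertices hu huv
  · simp only [lastVertices, Set.mem_ofPred_eq, not_forall, not_not] at hu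
    obtain ⟨w, huw, hw⟩ := hu
    have hwv : w ≠ v := by
      rintro rfl
      exact hadj huw
    have := hd.ne hwv
    have huw : spreadLabel H d u < spreadLabel H d w := spreadLabel_lt (by omega)
    have hwv : spreadLabel H d w < spreadLabel H d v := spreadLabel_lt (by omega)
    omega

theorem spreadLabel_add_two_le_card [Finite V] (hcard : ∀ v, d v < Nat.card V) (v : V) :
    spreadLabel H d v + 2 ≤ Nat.card V + (lastVertices H d).ncard := by
  have : Nonempty V := ⟨v⟩
  obtain ⟨m, hm⟩ := Finite.exists_max d
  have hlast : m ∈ lastVertices H d := fun w _ hdw => by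
    have := hm w
    omega
  have hlt : {w ∈ lastVertices H d | d w < d v}.ncard < (lastVertices H d).ncard :=
    Set.ncard_lt_ncard ⟨fun _ hw => hw.1, fun h => (h hlast).2.not_ge (hm v)⟩
  have := hcard v
  rw [spreadLabel]
  omega

end SpreadLabel

section ComplementLabelings

variable {G : SimpleGraph V} {f : V → ℕ} {k : ℕ} {u v w z : V}

theorem IsL21Labeling.two_le_dist_of_not_adj (hf : IsL21Labeling Gᶜ f) (huv : u ≠ v)
    (hadj : ¬ G.Adj u v) : 2 ≤ Nat.dist (f u) (f v) :=
  hf.1 u v ((compl_adj _ _ _).2 ⟨huv, hadj⟩)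

theorem isL21Labeling_compl_of_injective (hinj : Function.Injective f)
    (hf : ∀ u v, f u < f v → ¬ G.Adj u v → f u + 2 ≤ f v) : IsL21Labeling Gᶜ f := by
  refine ⟨fun u v huv => ?_, fun u v huv => Nat.dist_pos_of_ne (hinj.ne ?_)⟩
  · obtain ⟨hne, hadj⟩ := (compl_adj _ _ _).1 huv
    rcases (hinj.ne hne).lt_or_gt with h | h
    · have := hf u v h hadj
      rw [Nat.dist_eq_sub_of_le h.le]
      omega
    · have := hf v u h fun h => hadj h.symm
      rw [Nat.dist_eq_sub_of_le_right h.le]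
      omega
  · rintro rfl
    simp at huv

theorem exists_injective_isL21Labeling_compl [Finite V] (G : SimpleGraph V) :
    ∃ f : V → ℕ, Function.Injective f ∧ IsL21Labeling Gᶜ f ∧
      ∀ v, f v + 2 ≤ Nat.card V + pathCoverNumber G := by
  obtain ⟨H, hHG, hH, hP⟩ := exists_isMinPathCover G
  obtain ⟨d, hd, hcard⟩ := hH.exists_isTraversal
  have hinj : Function.Injective (spreadLabel H d) := spreadLabel_injective hd.injective
  refine ⟨spreadLabel H d, hinj, isL21Labeling_compl_of_injective hinj fun u v huv hadj => ?_, ?_⟩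
  · refine spreadLabel_add_two_le hd.injective ?_ fun h => hadj (hHG h)
    by_contra! hle
    rcases hle.lt_or_eq with h | h
    · exact huv.not_gt (spreadLabel_lt h)
    · exact huv.ne (congrArg _ (hd.injective h.symm))
  · rw [← hP, hd.numPaths_eq]
    exact spreadLabel_add_two_le_card hcard

theorem IsL21Labeling.comap_hasse_le (hf : IsL21Labeling Gᶜ f) : (hasse ℕ).comap f ≤ G := by
  intro u v huv
  by_contra hadj
  have hdist := hf.two_le_dist_of_not_adj huv.ne hadj
  rw [comap_hasse_adj] at huv
  rw [Nat.dist] at hdist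
  omega

theorem ncard_lastVertices_comap_hasse_add_card_le [Finite V] (hinj : Function.Injective f)
    (hk : ∀ v, f v ≤ k) :
    (lastVertices ((hasse ℕ).comap f) f).ncard + Nat.card V ≤ k + 2 := by
  set L := lastVertices ((hasse ℕ).comap f) f
  -- The successor of the last label of a run is never used as a label.
  have hdisj : Disjoint ((fun v => f v + 1) '' L) (Set.range f) := by
    rw [Set.disjoint_left]
    rintro _ ⟨v, hv, rfl⟩ ⟨w, hw⟩
    exact hv w (comap_hasse_adj.2 (.inl hw.symm)) hw
  have hsub : (fun v => f v + 1) '' L ∪ Set.range f ⊆ Set.Iio (k + 2) := by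
    rintro _ (⟨v, -, rfl⟩ | ⟨v, rfl⟩) <;>
    · have := hk v
      simp only [Set.mem_Iio]
      omega
  calc L.ncard + Nat.card V = ((fun v => f v + 1) '' L).ncard + (Set.range f).ncard := by
        rw [Set.ncard_range_of_injective hinj]
        exact congrArg (· + _)
          (Set.ncard_image_of_injective L ((add_left_injective 1).comp hinj)).symm
    _ = ((fun v => f v + 1) '' L ∪ Set.range f).ncard := (Set.ncard_union_eq hdisj).symm
    _ ≤ (Set.Iio (k + 2)).ncard := Set.ncard_le_ncard hsub
    _ = k + 2 := by simp

theorem IsL21Labeling.card_add_pathCoverNumber_le [Finite V] (hf : IsL21Labeling Gᶜ f)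
    (hinj : Function.Injective f) (hk : ∀ v, f v ≤ k) :
    Nat.card V + pathCoverNumber G ≤ k + 2 := by
  have htrav : IsTraversal ((hasse ℕ).comap f) f := ⟨hinj, le_rfl⟩
  have hP := pathCoverNumber_le hf.comap_hasse_le htrav.isLinearForest
  rw [htrav.numPaths_eq] at hP
  have := ncard_lastVertices_comap_hasse_add_card_le hinj hk
  omega

theorem not_adj_of_three_lt_egirth (hG : 3 < G.egirth) (huv : G.Adj u v) (hvw : G.Adj v w) :
    ¬ G.Adj u w := by
  intro huw
  have hcycle : (Walk.cons huv (.cons hvw (.cons huw.symm .nil))).IsCycle := by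
    simp [Walk.isCycle_def, Walk.isTrail_def, huv.ne, hvw.ne, huw.ne, huw.ne', huv.ne']
  exact (egirth_le_length hcycle).not_gt hG

theorem not_adj_of_four_lt_egirth (hG : 4 < G.egirth) (huv : G.Adj u v) (hvw : G.Adj v w)
    (hwz : G.Adj w z) (huw : u ≠ w) (hvz : v ≠ z) : ¬ G.Adj u z := by
  intro huz
  have hcycle : (Walk.cons huv (.cons hvw (.cons hwz (.cons huz.symm .nil)))).IsCycle := by
    simp [Walk.isCycle_def, Walk.isTrail_def, huv.ne, hvw.ne, huz.ne, hwz.ne, huw, hvz,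
      huv.ne', huz.ne', huw.symm]
  exact (egirth_le_length hcycle).not_gt hG

theorem IsL21Labeling.adj_of_label_eq (hf : IsL21Labeling Gᶜ f) (huv : u ≠ v) (h : f u = f v) :
    G.Adj u v := by
  by_contra hadj
  have := hf.two_le_dist_of_not_adj huv hadj
  rw [h, Nat.dist_self] at this
  omega

theorem IsL21Labeling.adj_or_adj_of_label_eq (hf : IsL21Labeling Gᶜ f) (huv : u ≠ v)
    (h : f u = f v) (hwu : w ≠ u) (hwv : w ≠ v) : G.Adj w u ∨ G.Adj w v := by
  by_contra! hw
  have huw : Gᶜ.Adj u w := (compl_adj _ _ _).2 ⟨hwu.symm, fun h => hw.1 h.symm⟩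
  have hwv : Gᶜ.Adj w v := (compl_adj _ _ _).2 ⟨hwv, hw.2⟩
  have hle : Gᶜ.dist u v ≤ 2 := dist_le (.cons huw (.cons hwv .nil))
  have hlt : 1 < Gᶜ.dist u v :=
    (huw.reachable.trans hwv.reachable).one_lt_dist_of_ne_of_not_adj huv fun hc =>
      ((compl_adj _ _ _).1 hc).2 (hf.adj_of_label_eq huv h)
  have := hf.2 u v (by omega)
  rw [h, Nat.dist_self] at this
  omega

theorem IsL21Labeling.not_adj_of_label_eq (hf : IsL21Labeling Gᶜ f) (hG : 4 < G.egirth)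
    (huv : u ≠ v) (h : f u = f v) (hwu : w ≠ u) (hwv : w ≠ v) (hzu : z ≠ u) (hzv : z ≠ v) :
    ¬ G.Adj w z := by
  have hG3 : 3 < G.egirth := lt_trans (by norm_num) hG
  have hadj := hf.adj_of_label_eq huv h
  rcases hf.adj_or_adj_of_label_eq huv h hwu hwv with hw | hw <;>
    rcases hf.adj_or_adj_of_label_eq huv h hzu hzv with hz | hz
  · exact not_adj_of_three_lt_egirth hG3 hw hz.symm
  · exact not_adj_of_four_lt_egirth hG hw hadj hz.symm hwv hzu.symm
  · exact not_adj_of_four_lt_egirth hG hw hadj.symm hz.symm hwu hzv.symm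
  · exact not_adj_of_three_lt_egirth hG3 hw hz.symm

theorem IsL21Labeling.two_le_dist_of_label_eq (hf : IsL21Labeling Gᶜ f) (hG : 4 < G.egirth)
    (huv : u ≠ v) (h : f u = f v) (hwu : w ≠ u) (hwv : w ≠ v) : 2 ≤ Nat.dist (f w) (f u) := by
  by_cases hw : G.Adj w u
  · rw [h]
    exact hf.two_le_dist_of_not_adj hwv
      (not_adj_of_three_lt_egirth (lt_trans (by norm_num) hG) hw (hf.adj_of_label_eq huv h))
  · exact hf.two_le_dist_of_not_adj hwu hw

theorem IsL21Labeling.pairwise_of_label_eq (hf : IsL21Labeling Gᶜ f) (hG : 4 < G.egirth)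
    (huv : u ≠ v) (h : f u = f v) :
    ({v}ᶜ : Set V).Pairwise fun w z => 2 ≤ Nat.dist (f w) (f z) := by
  intro w hw z hz hwz
  by_cases hwu : w = u
  · subst hwu
    rw [Nat.dist_comm]
    exact hf.two_le_dist_of_label_eq hG huv h hwz.symm hz
  by_cases hzu : z = u
  · subst hzu
    exact hf.two_le_dist_of_label_eq hG huv h hwz hw
  · exact hf.two_le_dist_of_not_adj hwz (hf.not_adj_of_label_eq hG huv h hwu hw hzu hz)

theorem two_mul_ncard_le_of_pairwise {s : Set V} (hk : ∀ v, f v ≤ k)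
    (hs : s.Pairwise fun w z => 2 ≤ Nat.dist (f w) (f z)) : 2 * s.ncard ≤ k + 2 := by
  have hinj : s.InjOn fun w => f w / 2 := by
    intro w hw z hz hwz
    by_contra hne
    have := hs hw hz hne
    simp only [Nat.dist] at hwz this
    omega
  have hle : s.ncard ≤ (Set.Iio (k / 2 + 1)).ncard :=
    Set.ncard_le_ncard_of_injOn _
      (fun w _ => Nat.lt_succ_of_le (Nat.div_le_div_right (hk w))) hinj
  simp only [Set.ncard_Iio_nat] at hle
  omega

theorem IsL21Labeling.two_mul_card_le_of_not_injective [Finite V] (hf : IsL21Labeling Gᶜ f)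
    (hG : 4 < G.egirth) (hinj : ¬ Function.Injective f) (hk : ∀ v, f v ≤ k) :
    2 * Nat.card V ≤ k + 4 := by
  simp only [Function.Injective, not_forall] at hinj
  obtain ⟨u, v, h, huv⟩ := hinj
  have := two_mul_ncard_le_of_pairwise hk (hf.pairwise_of_label_eq hG huv h)
  have := Set.ncard_add_ncard_compl {v}
  rw [Set.ncard_singleton] at this
  omega

end ComplementLabelings

section Holes

variable {G : SimpleGraph V} {f : V → ℕ} {k : ℕ}

theorem lambdaNum_le (hf : IsL21Labeling G f) (hk : ∀ v, f v ≤ k) : lambdaNum G ≤ k :=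
  Nat.sInf_le ⟨f, hf, hk⟩

theorem exists_isL21Labeling_le_lambdaNum (hf : IsL21Labeling G f) (hk : ∀ v, f v ≤ k) :
    ∃ g, IsL21Labeling G g ∧ ∀ v, g v ≤ lambdaNum G :=
  Nat.sInf_mem (s := {k | ∃ g : V → ℕ, IsL21Labeling G g ∧ ∀ v, g v ≤ k}) ⟨k, f, hf, hk⟩

theorem IsL21Labeling.exists_eq_lambdaNum [Nonempty V] (hf : IsL21Labeling G f)
    (hk : ∀ v, f v ≤ lambdaNum G) : ∃ v, f v = lambdaNum G := by
  by_contra! h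
  have hlt (v : V) : f v < lambdaNum G := (hk v).lt_of_ne (h v)
  have hle := lambdaNum_le hf fun v => Nat.le_sub_one_of_lt (hlt v)
  have := hlt (Classical.arbitrary V)
  omega

theorem IsL21Labeling.sub_one (hf : IsL21Labeling G f) (h : ∀ v, f v ≠ 0) :
    IsL21Labeling G fun v => f v - 1 := by
  have hdist (u v : V) : Nat.dist (f u - 1) (f v - 1) = Nat.dist (f u) (f v) := by
    have := h u
    have := h v
    simp only [Nat.dist]
    omega
  exact ⟨fun u v huv => (hdist u v).symm ▸ hf.1 u v huv,
    fun u v huv => (hdist u v).symm ▸ hf.2 u v huv⟩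

theorem IsL21Labeling.exists_eq_zero [Nonempty V] (hf : IsL21Labeling G f)
    (hk : ∀ v, f v ≤ lambdaNum G) : ∃ v, f v = 0 := by
  by_contra! h
  have hle := lambdaNum_le (hf.sub_one h) fun v => Nat.sub_le_sub_right (hk v) 1
  have := h (Classical.arbitrary V)
  have := hk (Classical.arbitrary V)
  omega

theorem IsL21Labeling.labHoles_eq [Nonempty V] (hf : IsL21Labeling G f)
    (hk : ∀ v, f v ≤ lambdaNum G) : labHoles G f = Set.Iio (lambdaNum G + 1) \ Set.range f := by
  obtain ⟨a, ha⟩ := hf.exists_eq_lambdaNum hk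
  obtain ⟨b, hb⟩ := hf.exists_eq_zero hk
  ext i
  simp only [labHoles, Set.mem_ofPred_eq, Set.mem_sdiff, Set.mem_Iio, Set.mem_range, not_exists]
  refine ⟨fun ⟨_, _, hunused⟩ => ⟨by omega, hunused⟩, fun ⟨_, hunused⟩ => ⟨?_, ?_, hunused⟩⟩
  · have := hunused b
    omega
  · have := hunused a
    omega

theorem IsL21Labeling.ncard_labHoles_add [Nonempty V] (hf : IsL21Labeling G f)
    (hk : ∀ v, f v ≤ lambdaNum G) :
    (labHoles G f).ncard + (Set.range f).ncard = lambdaNum G + 1 := by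
  have hsub : Set.range f ⊆ Set.Iio (lambdaNum G + 1) := by
    rintro _ ⟨v, rfl⟩
    exact Nat.lt_succ_of_le (hk v)
  rw [hf.labHoles_eq hk, Set.ncard_sdiff_add_ncard_of_subset hsub]
  simp

theorem holeIndex_add_card [Finite V] [Nonempty V] (hf : IsL21Labeling G f)
    (hinj : Function.Injective f) (hk : ∀ v, f v ≤ lambdaNum G) :
    holeIndex G + Nat.card V = lambdaNum G + 1 := by
  have hmem : (labHoles G f).ncard ∈
      {k | ∃ f : V → ℕ, IsLambdaLabeling G f ∧ (labHoles G f).ncard = k} :=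
    ⟨f, ⟨hf, hk, hf.exists_eq_lambdaNum hk⟩, rfl⟩
  have hle : holeIndex G ≤ (labHoles G f).ncard := Nat.sInf_le hmem
  obtain ⟨g, hg, hgholes⟩ := Nat.sInf_mem ⟨_, hmem⟩
  have hgrange : (Set.range g).ncard ≤ Nat.card V := by
    rw [← Set.image_univ, ← Set.ncard_univ]
    exact Set.ncard_image_le
  have hfcount := hf.ncard_labHoles_add hk
  have hgcount := hg.1.ncard_labHoles_add hg.2.1
  rw [Set.ncard_range_of_injective hinj] at hfcount
  rw [hgholes, ← holeIndex] at hgcount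
  omega

end Holes

section Complement

variable {G : SimpleGraph V} [Finite V]

theorem lambdaNum_compl_add_two (hG : 4 < G.egirth) (hP : pathCoverNumber G + 2 ≤ Nat.card V) :
    lambdaNum Gᶜ + 2 = Nat.card V + pathCoverNumber G := by
  obtain ⟨f, -, hf, hfk⟩ := exists_injective_isL21Labeling_compl G
  have hle : lambdaNum Gᶜ ≤ Nat.card V + pathCoverNumber G - 2 :=
    lambdaNum_le hf fun v => Nat.le_sub_of_add_le (hfk v)
  obtain ⟨g, hg, hgk⟩ := exists_isL21Labeling_le_lambdaNum hf
    fun v => Nat.le_sub_of_add_le (hfk v)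
  have hge : Nat.card V + pathCoverNumber G ≤ lambdaNum Gᶜ + 2 := by
    by_cases hinj : Function.Injective g
    · exact hg.card_add_pathCoverNumber_le hinj hgk
    · have := hg.two_mul_card_le_of_not_injective hG hinj hgk
      omega
  omega

theorem holeIndex_compl_add_one (hG : 4 < G.egirth) (hP : pathCoverNumber G + 2 ≤ Nat.card V) :
    holeIndex Gᶜ + 1 = pathCoverNumber G := by
  have hlam := lambdaNum_compl_add_two hG hP
  obtain ⟨f, hinj, hf, hfk⟩ := exists_injective_isL21Labeling_compl G
  have : Nonempty V := (Nat.card_pos_iff.1 (by omega)).1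
  have := holeIndex_add_card hf hinj fun v => by
    have := hfk v
    omega
  omega

end Complement

section EdgeCounting

variable {G : SimpleGraph V}

/-- The set of edges of `G` having both endpoints in `s`. -/
def edgesWithin (G : SimpleGraph V) (s : Set V) : Set (Sym2 V) :=
  {e ∈ G.edgeSet | ∀ v ∈ e, v ∈ s}

theorem edgesWithin_mono {G H : SimpleGraph V} (h : G ≤ H) (s : Set V) :
    edgesWithin G s ⊆ edgesWithin H s :=
  fun _ he => ⟨edgeSet_mono h he.1, he.2⟩

theorem mk_mem_edgesWithin {s : Set V} {u v : V} :
    s(u, v) ∈ edgesWithin G s ↔ G.Adj u v ∧ u ∈ s ∧ v ∈ s := by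
  simp [edgesWithin]

theorem edgeSet_fromEdgeSet_of_subset {R : Set (Sym2 V)} (hR : R ⊆ G.edgeSet) :
    (fromEdgeSet R).edgeSet = R := by
  rw [edgeSet_fromEdgeSet, sdiff_eq_left]
  exact Set.subset_compl_iff_disjoint_right.1 (hR.trans G.edgeSet_subset_compl_diagSet)

theorem ncard_eq_sum_ite {α : Type*} {s : Set α} [DecidablePred (· ∈ s)] {A : Finset α}
    (h : s ⊆ A) : s.ncard = ∑ x ∈ A, if x ∈ s then 1 else 0 := by
  rw [← Finset.card_filter, ← Set.ncard_coe_finset, Finset.coe_filter]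
  exact congrArg Set.ncard (Set.ext fun x => ⟨fun hx => ⟨h hx, hx⟩, And.right⟩)

theorem ndeg_eq_ncard_incidenceSet (G : SimpleGraph V) (v : V) :
    ndeg G v = (G.incidenceSet v).ncard := by
  classical
  exact Set.ncard_congr' (G.incidenceSetEquivNeighborSet v).symm

theorem ndeg_le_ncard_edgeSet [Finite V] (G : SimpleGraph V) (v : V) :
    ndeg G v ≤ G.edgeSet.ncard := by
  rw [ndeg_eq_ncard_incidenceSet]
  exact Set.ncard_le_ncard (G.incidenceSet_subset v)

theorem ndeg_mono [Finite V] {G H : SimpleGraph V} (h : G ≤ H) (v : V) : ndeg G v ≤ ndeg H v :=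
  Set.ncard_le_ncard fun _ hw => h hw

theorem sum_ite_mem_sym2 [DecidableEq V] (A : Finset V) {a b : V} (hab : a ≠ b) :
    (∑ v ∈ A, if v ∈ s(a, b) then 1 else 0) =
      (if a ∈ A then 1 else 0) + if b ∈ A then 1 else 0 := by
  rw [← Finset.sum_ite_eq' A a fun _ => 1, ← Finset.sum_ite_eq' A b fun _ => 1,
    ← Finset.sum_add_distrib]
  refine Finset.sum_congr rfl fun v _ => ?_
  simp only [Sym2.mem_iff]
  grind

theorem ncard_edgeSet_add_ncard_edgesWithin [Finite V] (G : SimpleGraph V) (A : Finset V) :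
    G.edgeSet.ncard + (edgesWithin G A).ncard =
      (edgesWithin G (A : Set V)ᶜ).ncard + ∑ v ∈ A, ndeg G v := by
  have := Fintype.ofFinite V
  classical
  have hsub (p : Sym2 V → Prop) : {e ∈ G.edgeSet | p e} ⊆ G.edgeFinset := by
    rw [coe_edgeFinset]
    exact Set.sep_subset _ _
  have hinc (v : V) : ndeg G v = ∑ e ∈ G.edgeFinset, if v ∈ e then 1 else 0 := by
    rw [ndeg_eq_ncard_incidenceSet, incidenceSet, ncard_eq_sum_ite (hsub (v ∈ ·))]
    exact Finset.sum_congr rfl fun e he => by simp [mem_edgeFinset.1 he]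
  have hE : G.edgeSet.ncard = ∑ e ∈ G.edgeFinset, 1 := by
    rw [← Finset.card_eq_sum_ones, ← Set.ncard_coe_finset, coe_edgeFinset]
  rw [hE, edgesWithin, edgesWithin, ncard_eq_sum_ite (hsub _), ncard_eq_sum_ite (hsub _),
    Finset.sum_congr rfl fun v _ => hinc v, Finset.sum_comm, ← Finset.sum_add_distrib,
    ← Finset.sum_add_distrib]
  refine Finset.sum_congr rfl fun e he => ?_
  induction e with
  | _ a b =>
    have hab : G.Adj a b := mem_edgeFinset.1 he
    rw [sum_ite_mem_sym2 A hab.ne]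
    by_cases ha : a ∈ A <;> by_cases hb : b ∈ A <;> simp [ha, hb, hab]

end EdgeCounting

section Matchings

variable {G : SimpleGraph V} {S : Set V}

/-- `M` is the edge set of a matching of the subgraph of `G` induced by `S`. -/
def IsMatchingOn (G : SimpleGraph V) (S : Set V) (M : Set (Sym2 V)) : Prop :=
  M ⊆ G.edgeSet ∧ (∀ e ∈ M, ∀ v ∈ e, v ∈ S) ∧ ∀ e ∈ M, ∀ f ∈ M, e ≠ f → ∀ v, v ∈ e → v ∉ f

theorem matchingNumberOn_eq_sSup (G : SimpleGraph V) (S : Set V) :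
    matchingNumberOn G S = sSup {k | ∃ M, IsMatchingOn G S M ∧ M.ncard = k} := by
  simp only [matchingNumberOn, IsMatchingOn, and_assoc]

theorem bddAbove_ncard_isMatchingOn [Finite V] (G : SimpleGraph V) (S : Set V) :
    BddAbove {k | ∃ M, IsMatchingOn G S M ∧ M.ncard = k} := by
  refine ⟨G.edgeSet.ncard, ?_⟩
  rintro _ ⟨M, hM, rfl⟩
  exact Set.ncard_le_ncard hM.1

theorem isMatchingOn_empty (G : SimpleGraph V) (S : Set V) : IsMatchingOn G S ∅ := by
  simp [IsMatchingOn]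

theorem IsMatchingOn.ncard_le [Finite V] {M : Set (Sym2 V)} (hM : IsMatchingOn G S M) :
    M.ncard ≤ matchingNumberOn G S := by
  rw [matchingNumberOn_eq_sSup]
  exact le_csSup (bddAbove_ncard_isMatchingOn G S) ⟨M, hM, rfl⟩

theorem exists_isMatchingOn_ncard_eq [Finite V] (G : SimpleGraph V) (S : Set V) :
    ∃ M, IsMatchingOn G S M ∧ M.ncard = matchingNumberOn G S := by
  have hne : {k | ∃ M, IsMatchingOn G S M ∧ M.ncard = k}.Nonempty :=
    ⟨_, ∅, isMatchingOn_empty G S, rfl⟩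
  rw [matchingNumberOn_eq_sSup]
  exact Nat.sSup_mem hne (bddAbove_ncard_isMatchingOn G S)

theorem IsMatchingOn.insert {M : Set (Sym2 V)} (hM : IsMatchingOn G S M) {e : Sym2 V}
    (he : e ∈ edgesWithin G S) (hdisj : ∀ f ∈ M, ∀ v ∈ e, v ∉ f) :
    IsMatchingOn G S (insert e M) := by
  refine ⟨Set.insert_subset he.1 hM.1, ?_, ?_⟩
  · rintro f (rfl | hf)
    exacts [he.2, hM.2.1 f hf]
  · rintro f (rfl | hf) g (rfl | hg) hfg v hvf hvg
    exacts [hfg rfl, hdisj g hg v hvf hvg, hdisj f hf v hvg hvf, hM.2.2 f hf g hg hfg v hvf hvg]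

-- Edges are added one at a time: an edge covering two new vertices of `S` extends the matching.
theorem exists_isMatchingOn_ncard_covered_le [Finite V] {R : Set (Sym2 V)}
    (hR : R ⊆ G.edgeSet) :
    ∃ M ⊆ R, IsMatchingOn G S M ∧ {v ∈ S | ∃ e ∈ R, v ∈ e}.ncard ≤ R.ncard + M.ncard := by
  induction R, R.toFinite using Set.Finite.induction_on with
  | empty => exact ⟨∅, subset_rfl, isMatchingOn_empty G S, by simp⟩
  | @insert e R heR _ ih =>
    obtain ⟨M, hMR, hM, hle⟩ := ih ((Set.subset_insert e R).trans hR)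
    rw [Set.ncard_insert_of_notMem heR]
    set C : Set V := {v ∈ S | ∃ f ∈ R, v ∈ f}
    induction e with
    | _ a b =>
      have hcov : {v ∈ S | ∃ f ∈ insert s(a, b) R, v ∈ f} ⊆ ({a, b} ∩ (S \ C)) ∪ C := by
        rintro v ⟨hvS, f, rfl | hf, hvf⟩
        · by_cases hv : v ∈ C
          exacts [Or.inr hv, Or.inl ⟨by simpa using hvf, hvS, hv⟩]
        · exact Or.inr ⟨hvS, f, hf, hvf⟩
      have hpair : ({a, b} : Set V).ncard = 2 :=
        Set.ncard_pair (G.ne_of_adj (hR (Set.mem_insert _ _)))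
      have hcard := (Set.ncard_le_ncard hcov).trans (Set.ncard_union_le _ _)
      by_cases hnew : ({a, b} : Set V) ⊆ S \ C
      · have hmem : ∀ v ∈ s(a, b), v ∈ S \ C := fun v hv => hnew (by simpa using hv)
        have hdisj : ∀ f ∈ M, ∀ v ∈ s(a, b), v ∉ f := fun f hf v hv hvf =>
          (hmem v hv).2 ⟨(hmem v hv).1, f, hMR hf, hvf⟩
        refine ⟨insert s(a, b) M, Set.insert_subset_insert hMR, hM.insert
          ⟨hR (Set.mem_insert _ _), fun v hv => (hmem v hv).1⟩ hdisj, ?_⟩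
        rw [Set.ncard_insert_of_notMem fun h => heR (hMR h)]
        have := Set.ncard_le_ncard (Set.inter_subset_left (s := {a, b}) (t := S \ C))
        omega
      · refine ⟨M, hMR.trans (Set.subset_insert _ _), hM, ?_⟩
        have := Set.ncard_lt_ncard (Set.inter_ssubset_left_iff.2 hnew)
        omega

theorem ncard_covered_le [Finite V] (S : Set V) {R : Set (Sym2 V)} (hR : R ⊆ G.edgeSet) :
    {v ∈ S | ∃ e ∈ R, v ∈ e}.ncard ≤ R.ncard + matchingNumberOn G S := by
  obtain ⟨M, -, hM, hle⟩ := exists_isMatchingOn_ncard_covered_le (S := S) hR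
  exact hle.trans (Nat.add_le_add_left hM.ncard_le _)

theorem IsMatchingOn.eq_of_mk_mem {M : Set (Sym2 V)} (hM : IsMatchingOn G S M) {v x y : V}
    (hx : s(v, x) ∈ M) (hy : s(v, y) ∈ M) : x = y := by
  by_contra hxy
  exact hM.2.2 _ hx _ hy (fun h => hxy (Sym2.congr_right.1 h)) v (by simp) (by simp)

theorem exists_le_ndeg_le_ite_ncard_edgeSet_eq [Finite V] (G : SimpleGraph V) (S : Set V)
    [DecidablePred (· ∈ S)] :
    ∃ K ≤ G, (∀ v, ndeg K v ≤ if v ∈ S then 1 else 0) ∧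
      K.edgeSet.ncard = matchingNumberOn G S := by
  obtain ⟨M, hM, hcard⟩ := exists_isMatchingOn_ncard_eq G S
  have hadj {v w : V} (h : w ∈ (fromEdgeSet M).neighborSet v) : s(v, w) ∈ M :=
    ((fromEdgeSet_adj M).1 h).1
  refine ⟨fromEdgeSet M, (fromEdgeSet_le _).2 (Set.sdiff_subset.trans hM.1), fun v => ?_, ?_⟩
  · split_ifs with hv
    · exact (Set.ncard_le_one).2 fun x hx y hy => hM.eq_of_mk_mem (hadj hx) (hadj hy)
    · rw [Nat.le_zero, ndeg, Set.ncard_eq_zero, Set.eq_empty_iff_forall_notMem]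
      exact fun w hw => hv (hM.2.1 _ (hadj hw) v (by simp))
  · rw [edgeSet_fromEdgeSet_of_subset hM.1, hcard]

end Matchings

section HeavyVertices

variable {T H : SimpleGraph V}

/-- The set of heavy vertices of `T`. -/
noncomputable def heavyVertices [Fintype V] (T : SimpleGraph V) : Finset V := {v | 2 < ndeg T v}

/-- The set of light neighbors of `v` in `T`. -/
def lightNeighborSet (T : SimpleGraph V) (v : V) : Set V := {w | T.Adj v w ∧ ndeg T w ≤ 2}

/-- The set `S` of the paper: the heavy vertices of `T` with exactly one light neighbor. -/
def criticalVertices (T : SimpleGraph V) : Set V :=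
  {v | 2 < ndeg T v ∧ (lightNeighborSet T v).ncard = 1}

theorem mem_heavyVertices [Fintype V] {v : V} : v ∈ heavyVertices T ↔ 2 < ndeg T v := by
  simp [heavyVertices]

theorem notMem_heavyVertices [Fintype V] {v : V} : v ∉ heavyVertices T ↔ ndeg T v ≤ 2 := by
  rw [mem_heavyVertices, not_lt]

theorem criticalVertices_subset_heavyVertices [Fintype V] (T : SimpleGraph V) :
    criticalVertices T ⊆ heavyVertices T :=
  fun _ hv => mem_heavyVertices.2 hv.1

theorem sum_ndeg_heavyVertices_add_ncard_le [Fintype V] (hHT : H ≤ T) (hdeg : ∀ v, ndeg H v ≤ 2) :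
    ∑ v ∈ heavyVertices T, ndeg H v + (criticalVertices T).ncard ≤ 2 * (heavyVertices T).card +
      {v ∈ criticalVertices T | ∃ e ∈ edgesWithin H (heavyVertices T), v ∈ e}.ncard := by
  classical
  have hsub := criticalVertices_subset_heavyVertices T
  rw [ncard_eq_sum_ite hsub, ncard_eq_sum_ite ((Set.sep_subset _ _).trans hsub), mul_comm,
    ← smul_eq_mul, ← Finset.sum_const, ← Finset.sum_add_distrib, ← Finset.sum_add_distrib]
  refine Finset.sum_le_sum fun v hv => ?_
  by_cases hcov : ∃ e ∈ edgesWithin H (heavyVertices T), v ∈ e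
  · simp only [Set.mem_ofPred_eq, hcov, and_true]
    exact Nat.add_le_add_right (hdeg v) _
  by_cases hvS : v ∈ criticalVertices T
  · have hlight : H.neighborSet v ⊆ lightNeighborSet T v := fun w hvw =>
      ⟨hHT hvw, notMem_heavyVertices.1 fun hw =>
        hcov ⟨s(v, w), mk_mem_edgesWithin.2 ⟨hvw, hv, hw⟩, by simp⟩⟩
    have := hvS.2 ▸ Set.ncard_le_ncard hlight
    simp only [hvS, Set.mem_ofPred_eq, hcov, and_false, if_true, if_false]
    exact Nat.add_le_add_right this 1
  · simpa [hvS] using hdeg v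

theorem ncard_edgeSet_add_ncard_criticalVertices_le [Fintype V] (hHT : H ≤ T)
    (hdeg : ∀ v, ndeg H v ≤ 2) :
    H.edgeSet.ncard + (criticalVertices T).ncard ≤
      (edgesWithin T (heavyVertices T : Set V)ᶜ).ncard + 2 * (heavyVertices T).card +
        matchingNumberOn T (criticalVertices T) := by
  have hcount := ncard_edgeSet_add_ncard_edgesWithin H (heavyVertices T)
  have hlight := Set.ncard_le_ncard (edgesWithin_mono hHT (heavyVertices T : Set V)ᶜ)
  have hsum := sum_ndeg_heavyVertices_add_ncard_le hHT hdeg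
  have hcov := ncard_covered_le (criticalVertices T)
    (R := edgesWithin H (heavyVertices T)) fun e he => edgeSet_mono hHT he.1
  omega

end HeavyVertices

section ExtremalCovering

variable {T K : SimpleGraph V} {L : V → Finset V}

/-- The spanning subgraph of `T` formed by the edges between light vertices, the edges of `K`, and
the edges from each vertex `v` to the vertices of `L v`. It is used with `K` a maximum matching of
the critical vertices and `L v` a set of light neighbors of the heavy vertex `v`. -/
def coverGraph (T K : SimpleGraph V) (L : V → Finset V) : SimpleGraph V :=
  fromRel fun v w => (T.Adj v w ∧ ndeg T v ≤ 2 ∧ ndeg T w ≤ 2) ∨ K.Adj v w ∨ w ∈ L v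

theorem coverGraph_adj_iff {v w : V} (hL : ∀ v, ↑(L v) ⊆ lightNeighborSet T v) :
    (coverGraph T K L).Adj v w ↔
      (T.Adj v w ∧ ndeg T v ≤ 2 ∧ ndeg T w ≤ 2) ∨ K.Adj v w ∨ w ∈ L v ∨ v ∈ L w := by
  rw [coverGraph, fromRel_adj, T.adj_comm w v, K.adj_comm w v]
  have hadj : v = w → ¬ T.Adj v w ∧ ¬ K.Adj v w ∧ w ∉ L v := by
    rintro rfl
    exact ⟨T.irrefl, K.irrefl, fun h => T.irrefl (hL v h).1⟩
  grind

theorem coverGraph_le (hK : K ≤ T) (hL : ∀ v, ↑(L v) ⊆ lightNeighborSet T v) :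
    coverGraph T K L ≤ T := by
  intro v w h
  rcases (coverGraph_adj_iff hL).1 h with h | h | h | h
  exacts [h.1, hK h, (hL v h).1, (hL w h).1.symm]

theorem ndeg_coverGraph_of_two_lt [Finite V] {v : V} (hKv : ∀ w, K.Adj v w → 2 < ndeg T w)
    (hL : ∀ v, ↑(L v) ⊆ lightNeighborSet T v) (hv : 2 < ndeg T v) :
    ndeg (coverGraph T K L) v = (L v).card + ndeg K v := by
  have hN : (coverGraph T K L).neighborSet v = ↑(L v) ∪ K.neighborSet v := by
    ext w
    have : v ∈ L w → ndeg T v ≤ 2 := fun h => (hL w h).2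
    simp only [mem_neighborSet, coverGraph_adj_iff hL, Set.mem_union, Finset.mem_coe]
    grind
  have hdisj : Disjoint (L v : Set V) (K.neighborSet v) :=
    Set.disjoint_left.2 fun w hw hvw => (hL v hw).2.not_gt (hKv w hvw)
  rw [ndeg, hN, Set.ncard_union_eq hdisj, Set.ncard_coe_finset, ndeg]

theorem sum_ndeg_coverGraph_add_ncard [Fintype V] [DecidablePred (· ∈ criticalVertices T)]
    (hK : ∀ v w, K.Adj v w → 2 < ndeg T v) (hL : ∀ v, ↑(L v) ⊆ lightNeighborSet T v)
    (hLcard : ∀ v, 2 < ndeg T v → (L v).card + (if v ∈ criticalVertices T then 1 else 0) = 2) :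
    ∑ v ∈ heavyVertices T, ndeg (coverGraph T K L) v + (criticalVertices T).ncard =
      2 * (heavyVertices T).card + 2 * K.edgeSet.ncard := by
  have hKsum : ∑ v ∈ heavyVertices T, ndeg K v = 2 * K.edgeSet.ncard := by
    rw [← sum_ndeg]
    refine Finset.sum_subset (Finset.subset_univ _) fun v _ hv => ?_
    rw [ndeg, Set.ncard_eq_zero, Set.eq_empty_iff_forall_notMem]
    exact fun w hw => hv (mem_heavyVertices.2 (hK v w hw))
  rw [ncard_eq_sum_ite (criticalVertices_subset_heavyVertices T), ← hKsum,
    ← Finset.sum_add_distrib, mul_comm, ← smul_eq_mul, ← Finset.sum_const,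
    ← Finset.sum_add_distrib]
  refine Finset.sum_congr rfl fun v hv => ?_
  have hv := mem_heavyVertices.1 hv
  rw [ndeg_coverGraph_of_two_lt (fun w h => hK w v h.symm) hL hv, add_right_comm, hLcard v hv]

theorem edgesWithin_compl_heavyVertices_subset [Fintype V]
    (hL : ∀ v, ↑(L v) ⊆ lightNeighborSet T v) :
    edgesWithin T (heavyVertices T : Set V)ᶜ ⊆
      edgesWithin (coverGraph T K L) (heavyVertices T : Set V)ᶜ := by
  rintro ⟨v, w⟩ h
  obtain ⟨hvw, hv, hw⟩ := mk_mem_edgesWithin.1 h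
  exact mk_mem_edgesWithin.2 ⟨(coverGraph_adj_iff hL).2 (Or.inl
    ⟨hvw, notMem_heavyVertices.1 hv, notMem_heavyVertices.1 hw⟩), hv, hw⟩

theorem edgesWithin_coverGraph_heavyVertices_subset [Fintype V]
    (hL : ∀ v, ↑(L v) ⊆ lightNeighborSet T v) :
    edgesWithin (coverGraph T K L) (heavyVertices T) ⊆ K.edgeSet := by
  rintro ⟨v, w⟩ h
  obtain ⟨hvw, hv, hw⟩ := mk_mem_edgesWithin.1 h
  rw [Finset.mem_coe, mem_heavyVertices] at hv hw
  rcases (coverGraph_adj_iff hL).1 hvw with h | h | h | h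
  exacts [absurd hv h.2.1.not_gt, h, absurd hw (hL v h).2.not_gt, absurd hv (hL w h).2.not_gt]

theorem exists_subset_lightNeighborSet [Finite V]
    (hh : ∀ v, 2 < ndeg T v → ∃ w, T.Adj v w ∧ ndeg T w ≤ 2)
    [DecidablePred (· ∈ criticalVertices T)] (v : V) :
    ∃ L : Finset V, ↑L ⊆ lightNeighborSet T v ∧
      (2 < ndeg T v → L.card + (if v ∈ criticalVertices T then 1 else 0) = 2) := by
  by_cases hv : 2 < ndeg T v
  · have hpos : 0 < (lightNeighborSet T v).ncard := (Set.ncard_pos).2 (hh v hv)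
    have hle : 2 - (if v ∈ criticalVertices T then 1 else 0) ≤ (lightNeighborSet T v).ncard := by
      split_ifs with hvS
      · exact hpos
      · have : (lightNeighborSet T v).ncard ≠ 1 := fun h => hvS ⟨hv, h⟩
        omega
    obtain ⟨L, hL, hcard⟩ := Set.exists_subset_card_eq hle
    lift L to Finset V using L.toFinite
    rw [Set.ncard_coe_finset] at hcard
    exact ⟨L, hL, fun _ => by split_ifs at hcard ⊢ <;> omega⟩
  · exact ⟨∅, by simp, fun h => absurd h hv⟩

theorem exists_le_ncard_edgeSet_ge [Fintype V]
    (hh : ∀ v, 2 < ndeg T v → ∃ w, T.Adj v w ∧ ndeg T w ≤ 2) :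
    ∃ H ≤ T, (∀ v, ndeg H v ≤ 2) ∧
      (edgesWithin T (heavyVertices T : Set V)ᶜ).ncard + 2 * (heavyVertices T).card +
        matchingNumberOn T (criticalVertices T) ≤
      H.edgeSet.ncard + (criticalVertices T).ncard := by
  classical
  obtain ⟨K, hKT, hKdeg, hKcard⟩ :=
    exists_le_ndeg_le_ite_ncard_edgeSet_eq T (criticalVertices T)
  choose L hL hLcard using exists_subset_lightNeighborSet hh
  have hKheavy {v w : V} (h : K.Adj v w) : v ∈ criticalVertices T := by
    have := (ndeg_pos h).trans_le (hKdeg v)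
    by_contra hv
    simp [hv] at this
  refine ⟨coverGraph T K L, coverGraph_le hKT hL, fun v => ?_, ?_⟩
  · by_cases hv : 2 < ndeg T v
    · rw [ndeg_coverGraph_of_two_lt (fun w h => (hKheavy h.symm).1) hL hv, ← hLcard v hv]
      exact Nat.add_le_add_left (hKdeg v) _
    · exact (ndeg_mono (coverGraph_le hKT hL) v).trans (not_lt.1 hv)
  · have hcount := ncard_edgeSet_add_ncard_edgesWithin (coverGraph T K L) (heavyVertices T)
    have hlight := Set.ncard_le_ncard (edgesWithin_compl_heavyVertices_subset (K := K) hL)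
    have hheavy := Set.ncard_le_ncard (edgesWithin_coverGraph_heavyVertices_subset (K := K) hL)
    have hsum := sum_ndeg_coverGraph_add_ncard (fun v w h => (hKheavy h).1) hL hLcard
    omega

end ExtremalCovering

section ForestPathCover

variable {T : SimpleGraph V}

theorem pathCoverNumber_add_matchingNumberOn [Fintype V] (hT : T.IsAcyclic)
    (hh : ∀ v, 2 < ndeg T v → ∃ w, T.Adj v w ∧ ndeg T w ≤ 2) :
    pathCoverNumber T + (edgesWithin T (heavyVertices T : Set V)ᶜ).ncard +
        2 * (heavyVertices T).card + matchingNumberOn T (criticalVertices T) =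
      Nat.card V + (criticalVertices T).ncard := by
  obtain ⟨H, hHT, hH, hHP⟩ := exists_isMinPathCover T
  have hle := ncard_edgeSet_add_ncard_criticalVertices_le hHT hH.2
  have hHcard := numPaths_add_ncard_edgeSet hH.1
  obtain ⟨K, hKT, hKdeg, hge⟩ := exists_le_ncard_edgeSet_ge hh
  have hK : IsLinearForest K := ⟨hT.anti hKT, hKdeg⟩
  have hKP := pathCoverNumber_le hKT hK
  have hKcard := numPaths_add_ncard_edgeSet hK.1
  omega

theorem ncard_edgesWithin_compl_heavyVertices_add [Fintype V] (hpos : ∀ v, 0 < ndeg T v) :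
    (edgesWithin T (heavyVertices T : Set V)ᶜ).ncard + T.edgeSet.ncard +
        2 * (heavyVertices T).card + numLeaves T =
      2 * Nat.card V + numHeavyEdges T := by
  classical
  have hcount := ncard_edgeSet_add_ncard_edgesWithin T (heavyVertices T)
  have hheavy : (edgesWithin T (heavyVertices T)).ncard = numHeavyEdges T := by
    simp only [edgesWithin, numHeavyEdges, Finset.mem_coe, mem_heavyVertices]
  have hleaves : {v | ndeg T v = 1} ⊆ ((heavyVertices T)ᶜ : Finset V) := fun v hv => by
    rw [Finset.mem_coe, Finset.mem_compl, notMem_heavyVertices]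
    exact le_of_eq_of_le hv one_le_two
  have hlight : ∑ v ∈ (heavyVertices T)ᶜ, ndeg T v + numLeaves T =
      2 * (heavyVertices T)ᶜ.card := by
    rw [numLeaves, ncard_eq_sum_ite hleaves, ← Finset.sum_add_distrib, mul_comm, ← smul_eq_mul]
    refine Finset.sum_eq_card_nsmul fun v hv => ?_
    have hle := notMem_heavyVertices.1 (Finset.mem_compl.1 hv)
    have := hpos v
    simp only [Set.mem_ofPred_eq]
    split_ifs <;> omega
  have hall := sum_ndeg T
  have hsplit := Finset.sum_add_sum_compl (heavyVertices T) (ndeg T)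
  have hcompl := Finset.card_add_card_compl (heavyVertices T)
  rw [Nat.card_eq_fintype_card]
  omega

theorem pathCoverNumber_add_numHeavyEdges [Finite V] (hT : T.IsAcyclic)
    (hpos : ∀ v, 0 < ndeg T v) (hh : ∀ v, 2 < ndeg T v → ∃ w, T.Adj v w ∧ ndeg T w ≤ 2) :
    pathCoverNumber T + numHeavyEdges T + matchingNumberOn T (criticalVertices T) + numPaths T =
      numLeaves T + (criticalVertices T).ncard := by
  have := Fintype.ofFinite V
  have hP := pathCoverNumber_add_matchingNumberOn hT hh
  have hlight := ncard_edgesWithin_compl_heavyVertices_add hpos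
  have hE := numPaths_add_ncard_edgeSet hT
  omega

theorem pathCoverNumber_add_two_le [Finite V] (hT : T.IsAcyclic) (hE : 2 ≤ T.edgeSet.ncard) :
    pathCoverNumber T + 2 ≤ Nat.card V := by
  obtain ⟨R, hRT, hRcard⟩ := Set.exists_subset_card_eq hE
  have hedge := edgeSet_fromEdgeSet_of_subset hRT
  have hle : fromEdgeSet R ≤ T := (fromEdgeSet_le _).2 (Set.sdiff_subset.trans hRT)
  have hR : IsLinearForest (fromEdgeSet R) :=
    ⟨hT.anti hle, fun v => (ndeg_le_ncard_edgeSet _ v).trans (by rw [hedge, hRcard])⟩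
  have hcard := numPaths_add_ncard_edgeSet hR.1
  rw [hedge, hRcard] at hcard
  exact hcard ▸ Nat.add_le_add_right (pathCoverNumber_le hle hR) 2

theorem two_le_ncard_edgeSet [Finite V] (hpos : ∀ v, 0 < ndeg T v) (hV : 3 ≤ Nat.card V) :
    2 ≤ T.edgeSet.ncard := by
  have := Fintype.ofFinite V
  have hsum : Nat.card V ≤ ∑ v, ndeg T v := by
    rw [Nat.card_eq_fintype_card, ← Finset.card_univ, Finset.card_eq_sum_ones]
    exact Finset.sum_le_sum fun v _ => hpos v
  rw [sum_ndeg] at hsum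
  omega

theorem ndeg_lt_card [Finite V] (v : V) : ndeg T v < Nat.card V := by
  rw [← Set.ncard_univ]
  exact Set.ncard_lt_ncard (Set.ssubset_univ_iff.2 fun h => T.irrefl (h ▸ Set.mem_univ v))

theorem three_lt_card_of_not_isPathGraph [Finite V] (hT : T.IsTree) (hnp : ¬ IsPathGraph T) :
    3 < Nat.card V := by
  obtain ⟨v, hv⟩ : ∃ v, 2 < ndeg T v := by
    by_contra! h
    exact hnp ⟨hT, h⟩
  exact (Nat.succ_le_of_lt hv).trans_lt (ndeg_lt_card v)

theorem ndeg_pos_of_connected (hT : T.Connected) (hV : 1 < Nat.card V) (v : V) :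
    0 < ndeg T v := by
  have : Finite V := Nat.finite_of_card_ne_zero (by omega)
  have : Nontrivial V := Finite.one_lt_card_iff_nontrivial.1 hV
  obtain ⟨w, hw⟩ := hT.preconnected.exists_adj_of_nontrivial v
  exact ndeg_pos hw

theorem numPaths_of_connected (hT : T.Connected) : numPaths T = 1 := by
  have := hT.nonempty
  have := hT.preconnected.subsingleton_connectedComponent
  exact Nat.card_unique

end ForestPathCover

theorem tree_complement_lambda_hole_general [Finite V] {T : SimpleGraph V} (hT : T.IsAcyclic)
    (hpos : ∀ v, 0 < ndeg T v) (hV : 3 ≤ Nat.card V)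
    (hh : ∀ v, 2 < ndeg T v → ∃ w, T.Adj v w ∧ ndeg T w ≤ 2) {S : Set V}
    (hS : S = {v | 2 < ndeg T v ∧ {w | T.Adj v w ∧ ndeg T w ≤ 2}.ncard = 1}) :
    (lambdaNum Tᶜ : ℤ) =
      Nat.card V + numLeaves T - numHeavyEdges T + S.ncard - matchingNumberOn T S -
        numPaths T - 2 ∧
    (holeIndex Tᶜ : ℤ) =
      numLeaves T - numHeavyEdges T + S.ncard - matchingNumberOn T S - numPaths T - 1 := by
  obtain rfl : S = criticalVertices T := hS
  have hgirth : 4 < T.egirth := by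
    rw [hT.egirth_eq_top]
    exact ENat.natCast_lt_top 4
  have hle := pathCoverNumber_add_two_le hT (two_le_ncard_edgeSet hpos hV)
  have hP := pathCoverNumber_add_numHeavyEdges hT hpos hh
  have hlambda := lambdaNum_compl_add_two hgirth hle
  have hrho := holeIndex_compl_add_one hgirth hle
  omega

/-- **Corollary (Statement 4).** Let `T` be a non-path tree on `n` vertices, with `ℓ`
leaves and `h` heavy edges, in which each heavy vertex has at least one light neighbor.
With `S`, `s = |S|`, `t` as in Statement 2, `λ(Tᶜ) = n + ℓ − h + s − t − 3` and
`ρ(Tᶜ) = ℓ − h + s − t − 2`. -/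
theorem tree_complement_lambda_hole {V : Type*} [Fintype V] (T : SimpleGraph V)
    (hT : T.IsTree) (hnp : ¬ IsPathGraph T)
    (hh : ∀ v, 2 < ndeg T v → ∃ w, T.Adj v w ∧ ndeg T w ≤ 2)
    (S : Set V)
    (hS : S = {v | 2 < ndeg T v ∧ {w | T.Adj v w ∧ ndeg T w ≤ 2}.ncard = 1}) :
    (lambdaNum Tᶜ : ℤ) =
      Fintype.card V + numLeaves T - numHeavyEdges T + S.ncard - matchingNumberOn T S - 3 ∧
    (holeIndex Tᶜ : ℤ) =
      numLeaves T - numHeavyEdges T + S.ncard - matchingNumberOn T S - 2 := by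
  have hV := three_lt_card_of_not_isPathGraph hT hnp
  have hmain := tree_complement_lambda_hole_general hT.isAcyclic
    (ndeg_pos_of_connected hT.connected (by omega)) hV.le hh hS
  rw [numPaths_of_connected hT.connected, Nat.card_eq_fintype_card] at hmain
  omega

end PaperPC
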